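/- Let N ≥ 3, m > 1, γ ∈ [0,2), 0 < k ≤ K, and let ρ : (0,∞) → ℝ be measurable with k(1+y)^{−γ} ≤ ρ(y) ≤ K y^{−γ} for a.e. y > 0. Let 0 < β₁ < β₂ and let V₁, V₂ : [0,∞) → ℝ be continuous nonnegative functions satisfying respectively Vᵢ(y) = βᵢ^m + ∫₀^y z^{−(N−1)} ( ∫₀^z ζ^{N−1} ρ(ζ) Vᵢ(ζ)^{1/m} dζ ) dz for all y ≥ 0 (i = 1,2). Then V₁(y) < V₂(y) for all y ≥ 0. -/

import Mathlib

open MeasureTheory Metric Filter Set ENNReal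

noncomputable section

abbrev Euc (N : ℕ) := EuclideanSpace ℝ (Fin N)

/-- The weight condition: `k (1+|x|)^(-γ) ≤ ρ(x) ≤ K |x|^(-γ)` for a.e. `x`. -/
def WeightCond (N : ℕ) (γ k K : ℝ) (ρ : Euc N → ℝ) : Prop :=
  Measurable ρ ∧
    ∀ᵐ x : Euc N ∂volume, k * (1 + ‖x‖) ^ (-γ) ≤ ρ x ∧ ρ x ≤ K * ‖x‖ ^ (-γ)

/-- Local integrability with respect to the weight `ρ`. -/
def LocInt1 {N : ℕ} (ρ f : Euc N → ℝ) : Prop :=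
  ∀ R : ℝ, 0 < R → IntegrableOn (fun x => |f x| * ρ x) (ball (0 : Euc N) R)

/-- The weighted norm `‖f‖_{1,r}`. -/
def wnorm1 {N : ℕ} (ρ : Euc N → ℝ) (m γ : ℝ) (r : ℝ) (f : Euc N → ℝ) : ℝ :=
  sSup ((fun R : ℝ =>
    R ^ (-((2 - γ) / (m - 1)) - (N : ℝ) + γ) * ∫ x in ball (0 : Euc N) R, |f x| * ρ x) '' Ici r)

/-- Membership in the space `X`. -/
def memX {N : ℕ} (ρ : Euc N → ℝ) (m γ : ℝ) (f : Euc N → ℝ) : Prop :=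
  LocInt1 ρ f ∧
    BddAbove ((fun R : ℝ =>
      R ^ (-((2 - γ) / (m - 1)) - (N : ℝ) + γ) * ∫ x in ball (0 : Euc N) R, |f x| * ρ x) '' Ici 1)

/-- `ℓ(f) = lim_{r→∞} ‖f‖_{1,r}`; since `r ↦ ‖f‖_{1,r}` is nonincreasing and nonnegative,
the limit equals the infimum. -/
def ell {N : ℕ} (ρ : Euc N → ℝ) (m γ : ℝ) (f : Euc N → ℝ) : ℝ :=
  sInf ((fun r : ℝ => wnorm1 ρ m γ r f) '' Ici 1)

/-- The weighted norm `‖f‖_{∞,r}`. -/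
def wnormInf {N : ℕ} (m γ : ℝ) (r : ℝ) (f : Euc N → ℝ) : ℝ :=
  sSup ((fun R : ℝ =>
    R ^ (-((2 - γ) / (m - 1))) *
      (eLpNorm f ⊤ (volume.restrict (ball (0 : Euc N) R))).toReal) '' Ici r)

/-- Membership in the space `X_∞`. -/
def memXinf {N : ℕ} (m γ : ℝ) (f : Euc N → ℝ) : Prop :=
  AEStronglyMeasurable f volume ∧
  (∀ R : ℝ, 0 < R → eLpNorm f ⊤ (volume.restrict (ball (0 : Euc N) R)) < ⊤) ∧
  BddAbove ((fun R : ℝ =>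
    R ^ (-((2 - γ) / (m - 1))) *
      (eLpNorm f ⊤ (volume.restrict (ball (0 : Euc N) R))).toReal) '' Ici 1)

/-- Signed power `u^m := |u|^(m-1) u`. -/
def spow (m s : ℝ) : ℝ := |s| ^ (m - 1) * s

/-- The Laplacian of `φ : ℝᴺ → ℝ`, as a sum of second directional derivatives along the
standard orthonormal basis. -/
def lap {N : ℕ} (φ : Euc N → ℝ) (x : Euc N) : ℝ :=
  ∑ i : Fin N, fderiv ℝ (fun y => fderiv ℝ φ y (EuclideanSpace.single i (1 : ℝ))) x
    (EuclideanSpace.single i (1 : ℝ))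

/-- The open time interval `(0,T)`, for `T ∈ (0,∞]`. -/
def TimeSet (T : ℝ≥0∞) : Set ℝ := {t : ℝ | 0 < t ∧ ENNReal.ofReal t < T}

/-- The time interval `[0,T)`, for `T ∈ (0,∞]`. -/
def TimeSet0 (T : ℝ≥0∞) : Set ℝ := {t : ℝ | 0 ≤ t ∧ ENNReal.ofReal t < T}

/-- Very weak solution of `ρ u_t = Δ(u^m)` on `ℝᴺ × (0,T)` with initial datum `u₀`. -/
def IsVeryWeakSol {N : ℕ} (ρ : Euc N → ℝ) (m : ℝ) (T : ℝ≥0∞)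
    (u : Euc N → ℝ → ℝ) (u₀ : Euc N → ℝ) : Prop :=
  (∀ t ∈ TimeSet0 T, LocInt1 ρ (fun x => u x t)) ∧
  (∀ s ∈ TimeSet0 T, ∀ R : ℝ, 0 < R →
    Tendsto (fun t => ∫ x in ball (0 : Euc N) R, |u x t - u x s| * ρ x)
      (nhdsWithin s (TimeSet0 T)) (nhds 0)) ∧
  (∀ᵐ x : Euc N ∂volume, u x 0 = u₀ x) ∧
  (∀ R : ℝ, 0 < R → ∀ a b : ℝ, 0 < a → a ≤ b → ENNReal.ofReal b < T →
    IntegrableOn (fun p : Euc N × ℝ => spow m (u p.1 p.2)) (ball (0 : Euc N) R ×ˢ Icc a b)) ∧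
  (∀ φ : Euc N × ℝ → ℝ, ContDiff ℝ (⊤ : ℕ∞) φ → HasCompactSupport φ →
    tsupport φ ⊆ {p : Euc N × ℝ | p.2 ∈ TimeSet T} →
    -(∫ p : Euc N × ℝ in (univ : Set (Euc N)) ×ˢ TimeSet T,
        u p.1 p.2 * deriv (fun s => φ (p.1, s)) p.2 * ρ p.1) =
      ∫ p : Euc N × ℝ in (univ : Set (Euc N)) ×ˢ TimeSet T,
        spow m (u p.1 p.2) * lap (fun y => φ (y, p.2)) p.1)

/-- The existence time `T = C / L^(m-1)` if `L > 0`, and `T = ∞` if `L = 0` (here `L = ℓ(u₀)` or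
`L = ‖u₀‖_{1,r}`). -/
def Tof (C m L : ℝ) : ℝ≥0∞ := if 0 < L then ENNReal.ofReal (C / L ^ (m - 1)) else ⊤

end

/-!
Let `T g` be the radial solution of `Δ v = g` with `v(0) = 0` and no flux at the origin. `T` is a
Volterra operator with nonnegative kernel, so `T g y` increases with the values of `g` on `(0, y)`.
If a subsolution `V₁` of `V = c + T (ρ · f(V))` starts strictly below a supersolution `V₂`, then as
long as `V₁ < V₂` on `[0, y)` monotonicity of `f` and `T` preserves the initial gap at `y`; hence
there is no first point where the two meet. The bound `|g| ≤ C y ^ (-γ)` makes the inner integral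
converge when `γ < n` and the outer one, whose integrand is then `O(z ^ (1 - γ))`, when `γ < 2`.
-/

lemma lt_of_forall_Ico_lt {α β : Type*} [ConditionallyCompleteLinearOrder α] [TopologicalSpace α]
    [OrderTopology α] [LinearOrder β] [TopologicalSpace β] [OrderClosedTopology β]
    {a : α} {u v : α → β} (hu : ContinuousOn u (Ici a)) (hv : ContinuousOn v (Ici a))
    (hstep : ∀ y, a ≤ y → (∀ x ∈ Ico a y, u x < v x) → u y < v y) :
    ∀ y, a ≤ y → u y < v y := by
  by_contra! ⟨y, hay, hy⟩
  let crossings : Set α := {x ∈ Ici a | v x ≤ u x}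
  have hbdd : BddBelow crossings := ⟨a, fun x hx => hx.1⟩
  obtain ⟨hfirst, hle⟩ : sInf crossings ∈ crossings :=
    (isClosed_Ici.isClosed_le hv hu).csInf_mem ⟨y, hay, hy⟩ hbdd
  refine (hstep _ hfirst fun x hx => ?_).not_ge hle
  by_contra! hxle
  exact hx.2.not_ge (csInf_le hbdd ⟨hx.1, hxle⟩)

/-- Sources on `(0, ∞)` that are locally bounded away from the origin and `O(y ^ (-γ))` at it: the
class on which the radial Laplacian is inverted. The constant may depend on the radius `R`. -/
structure HasPowerSingularity (γ : ℝ) (g : ℝ → ℝ) : Prop where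
  aestronglyMeasurable : AEStronglyMeasurable g (volume.restrict (Ioi 0))
  exists_bound : ∀ R : ℝ, ∃ C : ℝ, ∀ᵐ y ∂volume.restrict (Ioc 0 R), ‖g y‖ ≤ C * y ^ (-γ)

/-- The flux `z ^ (n - 1) v'(z)` of the radial solution of `Δ v = g` in dimension `n`, which is
allowed to be any real number. -/
noncomputable def radialFlux (n : ℝ) (g : ℝ → ℝ) (z : ℝ) : ℝ :=
  ∫ ζ in (0 : ℝ)..z, ζ ^ (n - 1) * g ζ

/-- The radial solution of `Δ v = g` in dimension `n` with `v(0) = 0` and no flux at the origin. -/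
noncomputable def radialPotential (n : ℝ) (g : ℝ → ℝ) (y : ℝ) : ℝ :=
  ∫ z in (0 : ℝ)..y, z ^ (-(n - 1)) * radialFlux n g z

section

variable {n γ C R z : ℝ} {g g₁ g₂ ρ u : ℝ → ℝ}

lemma ae_norm_rpow_mul_le (n : ℝ)
    (hg : ∀ᵐ y ∂volume.restrict (Ioc 0 R), ‖g y‖ ≤ C * y ^ (-γ)) :
    ∀ᵐ y ∂volume.restrict (Ioc 0 R), ‖y ^ (n - 1) * g y‖ ≤ C * y ^ (n - γ - 1) := by
  filter_upwards [hg, ae_restrict_mem measurableSet_Ioc] with y hy ⟨hy0, _⟩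
  calc ‖y ^ (n - 1) * g y‖ = y ^ (n - 1) * ‖g y‖ := by
        rw [norm_mul, Real.norm_of_nonneg (by positivity)]
    _ ≤ y ^ (n - 1) * (C * y ^ (-γ)) := by gcongr
    _ = C * y ^ (n - γ - 1) := by
        rw [mul_left_comm, ← Real.rpow_add hy0]
        ring_nf

lemma intervalIntegrable_const_mul_rpow_sub_one (hγ : γ < n) (C R : ℝ) :
    IntervalIntegrable (fun y : ℝ => C * y ^ (n - γ - 1)) volume 0 R :=
  (intervalIntegral.intervalIntegrable_rpow' (by linarith)).const_mul C

lemma norm_radialFlux_le (hγ : γ < n) (hz : 0 ≤ z)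
    (hg : ∀ᵐ y ∂volume.restrict (Ioc 0 z), ‖g y‖ ≤ C * y ^ (-γ)) :
    ‖radialFlux n g z‖ ≤ C / (n - γ) * z ^ (n - γ) :=
  calc ‖radialFlux n g z‖ ≤ ∫ y in (0 : ℝ)..z, C * y ^ (n - γ - 1) :=
        intervalIntegral.norm_integral_le_of_norm_le hz
          ((ae_restrict_iff' measurableSet_Ioc).1 (ae_norm_rpow_mul_le n hg))
          (intervalIntegrable_const_mul_rpow_sub_one hγ C z)
    _ = C / (n - γ) * z ^ (n - γ) := by
        rw [intervalIntegral.integral_const_mul, integral_rpow (Or.inl (by linarith)),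
          sub_add_cancel, Real.zero_rpow (by linarith)]
        ring

namespace HasPowerSingularity

lemma of_nonneg_of_le (hρm : AEStronglyMeasurable ρ (volume.restrict (Ioi 0)))
    (hρ0 : ∀ᵐ y ∂volume.restrict (Ioi 0), 0 ≤ ρ y)
    (hρC : ∀ᵐ y ∂volume.restrict (Ioi 0), ρ y ≤ C * y ^ (-γ)) : HasPowerSingularity γ ρ where
  aestronglyMeasurable := hρm
  exists_bound R := by
    refine ⟨C, ae_restrict_of_ae_restrict_of_subset Ioc_subset_Ioi_self ?_⟩
    filter_upwards [hρ0, hρC] with y h0 hC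
    rwa [Real.norm_of_nonneg h0]

lemma mul_continuousOn (hρ : HasPowerSingularity γ ρ) (hu : ContinuousOn u (Ici 0)) :
    HasPowerSingularity γ (fun y => ρ y * u y) where
  aestronglyMeasurable := hρ.aestronglyMeasurable.mul
    ((hu.mono Ioi_subset_Ici_self).aestronglyMeasurable measurableSet_Ioi)
  exists_bound R := by
    obtain ⟨C, hC⟩ := hρ.exists_bound R
    obtain ⟨M, hM⟩ :=
      isCompact_Icc.exists_bound_of_continuousOn (hu.mono (Icc_subset_Ici_self : Icc 0 R ⊆ Ici 0))
    refine ⟨C * M, ?_⟩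
    filter_upwards [hC, ae_restrict_mem measurableSet_Ioc] with y hρy hy
    calc ‖ρ y * u y‖ = ‖ρ y‖ * ‖u y‖ := norm_mul _ _
      _ ≤ C * y ^ (-γ) * M :=
        mul_le_mul hρy (hM y (Ioc_subset_Icc_self hy)) (norm_nonneg _) ((norm_nonneg _).trans hρy)
      _ = C * M * y ^ (-γ) := by ring

lemma intervalIntegrable_rpow_mul (hg : HasPowerSingularity γ g) (hγ : γ < n) (hR : 0 ≤ R) :
    IntervalIntegrable (fun ζ => ζ ^ (n - 1) * g ζ) volume 0 R := by
  obtain ⟨C, hC⟩ := hg.exists_bound R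
  refine (intervalIntegrable_const_mul_rpow_sub_one hγ C R).mono_fun' ?_ ?_ <;> rw [uIoc_of_le hR]
  · exact (by fun_prop : Measurable fun ζ : ℝ => ζ ^ (n - 1)).aestronglyMeasurable.mul
      (hg.aestronglyMeasurable.mono_set Ioc_subset_Ioi_self)
  · exact ae_norm_rpow_mul_le n hC

lemma continuousOn_radialFlux (hg : HasPowerSingularity γ g) (hγ : γ < n) (hR : 0 ≤ R) :
    ContinuousOn (radialFlux n g) (Icc 0 R) := by
  rw [← uIcc_of_le hR]
  exact intervalIntegral.continuousOn_primitive_interval'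
    (hg.intervalIntegrable_rpow_mul hγ hR) left_mem_uIcc

lemma intervalIntegrable_rpow_mul_radialFlux (hg : HasPowerSingularity γ g) (hγn : γ < n)
    (hγ2 : γ < 2) (hR : 0 ≤ R) :
    IntervalIntegrable (fun z => z ^ (-(n - 1)) * radialFlux n g z) volume 0 R := by
  obtain ⟨C, hC⟩ := hg.exists_bound R
  refine (intervalIntegrable_const_mul_rpow_sub_one hγ2 (C / (n - γ)) R).mono_fun' ?_ ?_ <;>
    rw [uIoc_of_le hR]
  · exact (by fun_prop : Measurable fun z : ℝ => z ^ (-(n - 1))).aestronglyMeasurable.mul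
      (((hg.continuousOn_radialFlux hγn hR).mono Ioc_subset_Icc_self).aestronglyMeasurable
        measurableSet_Ioc)
  · filter_upwards [ae_restrict_mem measurableSet_Ioc] with z ⟨hz0, hzR⟩
    have hflux : ‖radialFlux n g z‖ ≤ C / (n - γ) * z ^ (n - γ) := norm_radialFlux_le hγn hz0.le
      (ae_restrict_of_ae_restrict_of_subset (Ioc_subset_Ioc_right hzR) hC)
    calc ‖z ^ (-(n - 1)) * radialFlux n g z‖ = z ^ (-(n - 1)) * ‖radialFlux n g z‖ := by
          rw [norm_mul, Real.norm_of_nonneg (by positivity)]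
      _ ≤ z ^ (-(n - 1)) * (C / (n - γ) * z ^ (n - γ)) := by gcongr
      _ = C / (n - γ) * z ^ (2 - γ - 1) := by
          rw [mul_left_comm, ← Real.rpow_add hz0]
          ring_nf

end HasPowerSingularity

lemma radialFlux_mono (hγ : γ < n) (hg₁ : HasPowerSingularity γ g₁)
    (hg₂ : HasPowerSingularity γ g₂) (hz : 0 ≤ z)
    (hle : ∀ᵐ ζ ∂volume.restrict (Ioc 0 z), g₁ ζ ≤ g₂ ζ) :
    radialFlux n g₁ z ≤ radialFlux n g₂ z := by
  refine intervalIntegral.integral_mono_ae_restrict hz (hg₁.intervalIntegrable_rpow_mul hγ hz)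
    (hg₂.intervalIntegrable_rpow_mul hγ hz) ?_
  rw [← restrict_Ioc_eq_restrict_Icc]
  filter_upwards [hle, ae_restrict_mem measurableSet_Ioc] with ζ hζ ⟨hζ0, _⟩
  gcongr

lemma radialPotential_mono (hγn : γ < n) (hγ2 : γ < 2) (hg₁ : HasPowerSingularity γ g₁)
    (hg₂ : HasPowerSingularity γ g₂) {y : ℝ} (hy : 0 ≤ y)
    (hle : ∀ᵐ ζ ∂volume.restrict (Ioc 0 y), g₁ ζ ≤ g₂ ζ) :
    radialPotential n g₁ y ≤ radialPotential n g₂ y := by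
  refine intervalIntegral.integral_mono_on_of_le_Ioo hy
    (hg₁.intervalIntegrable_rpow_mul_radialFlux hγn hγ2 hy)
    (hg₂.intervalIntegrable_rpow_mul_radialFlux hγn hγ2 hy) fun z ⟨hz0, hzy⟩ => ?_
  have hflux : radialFlux n g₁ z ≤ radialFlux n g₂ z := radialFlux_mono hγn hg₁ hg₂ hz0.le
    (ae_restrict_of_ae_restrict_of_subset (Ioc_subset_Ioc_right hzy.le) hle)
  gcongr

end

lemma ae_nonneg_of_rpow_le {k γ : ℝ} {ρ : ℝ → ℝ} (hk : 0 ≤ k)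
    (hρ : ∀ᵐ y ∂volume.restrict (Ioi (0 : ℝ)), k * (1 + y) ^ (-γ) ≤ ρ y) :
    ∀ᵐ y ∂volume.restrict (Ioi (0 : ℝ)), 0 ≤ ρ y := by
  filter_upwards [hρ, ae_restrict_mem measurableSet_Ioi] with y hy (hy0 : 0 < y)
  exact (by positivity : 0 ≤ k * (1 + y) ^ (-γ)).trans hy

theorem radial_ode_ordering_general {n γ c₁ c₂ : ℝ} (hγn : γ < n) (hγ2 : γ < 2) (hc : c₁ < c₂)
    {ρ : ℝ → ℝ} (hρ : HasPowerSingularity γ ρ) (hρ0 : ∀ᵐ y ∂volume.restrict (Ioi 0), 0 ≤ ρ y)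
    {f : ℝ → ℝ} {s : Set ℝ} (hfc : ContinuousOn f s) (hfm : MonotoneOn f s) {V₁ V₂ : ℝ → ℝ}
    (hV₁c : ContinuousOn V₁ (Ici 0)) (hV₁s : MapsTo V₁ (Ici 0) s)
    (hV₂c : ContinuousOn V₂ (Ici 0)) (hV₂s : MapsTo V₂ (Ici 0) s)
    (hV₁ : ∀ y, 0 ≤ y → V₁ y ≤ c₁ + radialPotential n (fun ζ => ρ ζ * f (V₁ ζ)) y)
    (hV₂ : ∀ y, 0 ≤ y → c₂ + radialPotential n (fun ζ => ρ ζ * f (V₂ ζ)) y ≤ V₂ y) :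
    ∀ y, 0 ≤ y → V₁ y < V₂ y := by
  refine lt_of_forall_Ico_lt hV₁c hV₂c fun y hy hlt => ?_
  have hsource : ∀ᵐ ζ ∂volume.restrict (Ioc 0 y), ρ ζ * f (V₁ ζ) ≤ ρ ζ * f (V₂ ζ) := by
    rw [← restrict_Ioo_eq_restrict_Ioc]
    filter_upwards [ae_restrict_of_ae_restrict_of_subset Ioo_subset_Ioi_self hρ0,
      ae_restrict_mem measurableSet_Ioo] with ζ hρζ ⟨hζ0, hζy⟩
    exact mul_le_mul_of_nonneg_left
      (hfm (hV₁s hζ0.le) (hV₂s hζ0.le) (hlt ζ ⟨hζ0.le, hζy⟩).le) hρζ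
  calc V₁ y ≤ c₁ + radialPotential n (fun ζ => ρ ζ * f (V₁ ζ)) y := hV₁ y hy
    _ < c₂ + radialPotential n (fun ζ => ρ ζ * f (V₂ ζ)) y := add_lt_add_of_lt_of_le hc <|
        radialPotential_mono hγn hγ2 (hρ.mul_continuousOn (hfc.comp hV₁c hV₁s))
          (hρ.mul_continuousOn (hfc.comp hV₂c hV₂s)) hy hsource
    _ ≤ V₂ y := hV₂ y hy

open MeasureTheory Metric Filter Set ENNReal in
/-- **Ordering principle for the radial elliptic ODE** (Step 3 of the proof of
Proposition 2.7 of Muratori–Petitt): solutions of the radial integral equation with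
ordered initial values `β₁ < β₂` are strictly ordered: `V₁ < V₂` everywhere. -/
theorem radial_ode_ordering
    (N : ℕ) (hN : 3 ≤ N) (m γ k K : ℝ)
    (hm : 1 < m) (hγ0 : 0 ≤ γ) (hγ2 : γ < 2) (hk : 0 < k) (hkK : k ≤ K)
    (ρ : ℝ → ℝ) (hρm : Measurable ρ)
    (hρ : ∀ᵐ y ∂(volume.restrict (Ioi (0 : ℝ))),
      k * (1 + y) ^ (-γ) ≤ ρ y ∧ ρ y ≤ K * y ^ (-γ))
    (β₁ β₂ : ℝ) (hβ₁ : 0 < β₁) (hβ : β₁ < β₂)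
    (V₁ V₂ : ℝ → ℝ)
    (hV₁c : ContinuousOn V₁ (Ici 0)) (hV₁nn : ∀ y : ℝ, 0 ≤ y → 0 ≤ V₁ y)
    (hV₂c : ContinuousOn V₂ (Ici 0)) (hV₂nn : ∀ y : ℝ, 0 ≤ y → 0 ≤ V₂ y)
    (hV₁eq : ∀ y : ℝ, 0 ≤ y → V₁ y = β₁ ^ m +
      ∫ z in (0 : ℝ)..y, z ^ (-((N : ℝ) - 1)) *
        ∫ ζ in (0 : ℝ)..z, ζ ^ ((N : ℝ) - 1) * ρ ζ * V₁ ζ ^ (1 / m))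
    (hV₂eq : ∀ y : ℝ, 0 ≤ y → V₂ y = β₂ ^ m +
      ∫ z in (0 : ℝ)..y, z ^ (-((N : ℝ) - 1)) *
        ∫ ζ in (0 : ℝ)..z, ζ ^ ((N : ℝ) - 1) * ρ ζ * V₂ ζ ^ (1 / m)) :
    ∀ y : ℝ, 0 ≤ y → V₁ y < V₂ y := by
  have hγN : γ < N := hγ2.trans (by exact_mod_cast hN)
  have hρ0 := ae_nonneg_of_rpow_le hk.le (hρ.mono fun _ h => h.1)
  have hρs : HasPowerSingularity γ ρ :=
    .of_nonneg_of_le hρm.aestronglyMeasurable hρ0 (hρ.mono fun _ h => h.2)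
  have hm_inv : 0 ≤ 1 / m := by positivity
  simp only [mul_assoc] at hV₁eq hV₂eq
  exact radial_ode_ordering_general hγN hγ2 (Real.rpow_lt_rpow hβ₁.le hβ (by positivity)) hρs hρ0
    (Real.continuous_rpow_const hm_inv).continuousOn
    (Real.monotoneOn_rpow_Ici_of_exponent_nonneg hm_inv)
    hV₁c hV₁nn hV₂c hV₂nn (fun y hy => (hV₁eq y hy).le) (fun y hy => (hV₂eq y hy).ge)
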